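/- Let Cₙ be the cycle of even order n ≥ 4, and let f₀ : V(G₁) → V(G₂) be a constant function between two disjoint copies G₁, G₂ of Cₙ. Then dim(C(Cₙ, f₀)) = ⌈2n/5⌉ + 1. -/

import Mathlib

/-- The functigraph `C(G, f)`: two disjoint copies of `G` (as `Sum.inl`/`Sum.inr`),
with an edge from each `Sum.inl u` to `Sum.inr (f u)`. -/
def functigraph {V : Type*} (G : SimpleGraph V) (f : V → V) : SimpleGraph (V ⊕ V) :=
  SimpleGraph.fromRel (fun x y =>
    match x, y with
    | Sum.inl a, Sum.inl b => G.Adj a b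
    | Sum.inr a, Sum.inr b => G.Adj a b
    | Sum.inl a, Sum.inr b => f a = b
    | Sum.inr _, Sum.inl _ => False)

/-- `S` is a resolving set of `H`: every pair of distinct vertices is resolved by some `w ∈ S`. -/
def IsResolving {V : Type*} (H : SimpleGraph V) (S : Set V) : Prop :=
  ∀ x y : V, x ≠ y → ∃ w ∈ S, H.dist x w ≠ H.dist y w

/-- The metric dimension of `H`: minimum cardinality of a (finite) resolving set. -/
noncomputable def metricDim {V : Type*} (H : SimpleGraph V) : ℕ :=
  sInf {k | ∃ S : Set V, IsResolving H S ∧ S.Finite ∧ S.ncard = k}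

/-- The cycle graph on `ZMod n` (for `n ≥ 3`): `i` is adjacent to `i ± 1`. -/
def cycGraph (n : ℕ) : SimpleGraph (ZMod n) :=
  SimpleGraph.fromRel (fun i j => j = i + 1)

/-- The closed neighborhood `N[S]` of a set `S` in `H`. -/
def closedNbhd {V : Type*} (H : SimpleGraph V) (S : Set V) : Set V :=
  S ∪ {x | ∃ s ∈ S, H.Adj x s}

/-!
In `C(G, f₀)` with `f₀` constant equal to `c`, any two vertices of the first copy are joined by a
path of length two through `c`, so a vertex of the first copy only sees which of the others are
equal or adjacent to it, while a vertex of the second copy sees the whole first copy as one pendant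
vertex at `c`. Hence the first-copy part of a resolving set must be locating in `G`, and some vertex
of the second copy is needed to separate two neighbours of `c`. If the first-copy part is not
dominating, then an undominated vertex must be separated from a neighbour of `c`, and for bipartite
`G` this costs another vertex of the second copy; that vertex can be traded for the undominated one.
So the metric dimension is the location-domination number of `G` plus one, provided `c` and one more
vertex resolve `G`.

For the cycle, Slater's bound `2 |V| ≤ (Δ + 3) |D|` gives location-domination number at least
`⌈2n/5⌉`, and the pattern `{0, 2}` repeated with period five attains it, except for `n = 4`, where
two adjacent vertices do.
-/

open Finset SimpleGraph

variable {V : Type*} {G : SimpleGraph V}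

section Graph

theorem le_add_dist_of_adj_le_add_one {g : V → ℕ} (hg : ∀ x y, G.Adj x y → g x ≤ g y + 1)
    {x y : V} (hxy : G.Reachable x y) : g x ≤ g y + G.dist x y := by
  suffices ∀ {x y} (p : G.Walk x y), g x ≤ g y + p.length by
    obtain ⟨p, hp⟩ := hxy.exists_walk_length_eq_dist
    exact hp ▸ this p
  intro x y p
  induction p with
  | nil => exact le_rfl
  | cons h p ih =>
    have := hg _ _ h
    rw [Walk.length_cons]
    omega

theorem dist_map_le {W : Type*} {H : SimpleGraph W} (φ : G →g H) {x y : V}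
    (hxy : G.Reachable x y) : H.dist (φ x) (φ y) ≤ G.dist x y := by
  obtain ⟨p, hp⟩ := hxy.exists_walk_length_eq_dist
  rw [← hp, ← Walk.length_map φ]
  exact dist_le _

theorem dist_ne_dist_of_adj_of_isBipartite (hG : G.IsBipartite) {x y b : V} (hxy : G.Adj x y)
    (hyb : G.Reachable y b) : G.dist x b ≠ G.dist y b := by
  intro heq
  obtain ⟨p, hp⟩ := (hxy.reachable.trans hyb).exists_walk_length_eq_dist
  obtain ⟨q, hq⟩ := hyb.exists_walk_length_eq_dist
  have hodd : Odd (Walk.cons hxy (q.append p.reverse)).length := by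
    rw [Walk.length_cons, Walk.length_append, Walk.length_reverse, hp, hq, heq]
    exact (Even.add_self _).add_one
  have h3 := Walk.three_le_chromaticNumber_of_odd_loop _ hodd
  have h2 := chromaticNumber_le_two_iff_isBipartite.2 hG
  exact absurd (h3.trans h2) (by decide)

end Graph

section LocatingDomination

/-- `D` is a locating set of `G`: a vertex outside `D` is determined by its neighbours in `D`. -/
def IsLocating (G : SimpleGraph V) (D : Set V) : Prop :=
  ∀ u v, u ∉ D → v ∉ D → (∀ d ∈ D, G.Adj u d ↔ G.Adj v d) → u = v

/-- `D` is a locating-dominating set of `G` in the sense of Slater. -/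
structure IsLocDom (G : SimpleGraph V) (D : Set V) : Prop where
  isLocating : IsLocating G D
  dominates : ∀ u, u ∈ closedNbhd G D

/-- The location-domination number of `G`: the minimum cardinality of a finite locating-dominating
set. If there is no such set, it takes the junk value `0`. -/
noncomputable def locDomNum (G : SimpleGraph V) : ℕ :=
  sInf {k | ∃ D : Finset V, IsLocDom G D ∧ #D = k}

theorem locDomNum_le {D : Finset V} (hD : IsLocDom G D) : locDomNum G ≤ #D :=
  Nat.sInf_le ⟨D, hD, rfl⟩

theorem exists_isLocDom_card_eq_locDomNum [Finite V] (G : SimpleGraph V) :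
    ∃ D : Finset V, IsLocDom G D ∧ #D = locDomNum G := by
  have := Fintype.ofFinite V
  refine Nat.sInf_mem (s := {k | ∃ D : Finset V, IsLocDom G D ∧ #D = k}) ⟨_, univ, ⟨?_, ?_⟩, rfl⟩
  · exact fun u _ hu ↦ absurd (mem_coe.2 (mem_univ u)) hu
  · exact fun u ↦ .inl (mem_coe.2 (mem_univ u))

theorem IsLocating.isLocDom_insert {D : Set V} (hD : IsLocating G D) {u : V}
    (hu : u ∉ closedNbhd G D) : IsLocDom G (insert u D) where
  isLocating x y hx hy h :=
    hD x y (fun hxD ↦ hx (.inr hxD)) (fun hyD ↦ hy (.inr hyD)) fun d hd ↦ h d (.inr hd)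
  dominates x := by
    by_contra hx
    have hux : u = x := by
      refine hD u x (fun huD ↦ hu (.inl huD)) (fun hxD ↦ hx (.inl (.inr hxD))) fun d hd ↦ ?_
      exact iff_of_false (fun had ↦ hu (.inr ⟨d, hd, had⟩))
        (fun had ↦ hx (.inr ⟨d, .inr hd, had⟩))
    exact hx (.inl (.inl hux.symm))

/-- Slater's bound: at most `#D` vertices outside `D` have a single neighbour in `D`, and each of
the others takes up at least two of the at most `Δ * #D` edges leaving `D`. -/
theorem IsLocDom.two_mul_card_le [Fintype V] [DecidableRel G.Adj] {D : Finset V}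
    (hD : IsLocDom G D) : 2 * Fintype.card V ≤ (G.maxDegree + 3) * #D := by
  classical
  let N (u : V) : Finset V := D.bipartiteAbove G.Adj u
  have N_nonempty {u : V} (hu : u ∉ D) : (N u).Nonempty := by
    obtain hu' | ⟨d, hd, had⟩ := hD.dominates u
    · exact absurd hu' hu
    · exact ⟨d, (mem_bipartiteAbove _).2 ⟨hd, had⟩⟩
  have eq_of_N_eq {u v : V} (hu : u ∉ D) (hv : v ∉ D) (h : N u = N v) : u = v := by
    refine hD.isLocating u v hu hv fun d hd ↦ ?_
    simpa [N, mem_coe.1 hd] using congrArg (d ∈ ·) h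
  have card_single_le : #{u ∈ Dᶜ | #(N u) = 1} ≤ #D := by
    refine card_le_card_of_forall_subsingleton (fun u d ↦ d ∈ N u) (fun u hu ↦ ?_) fun d _ ↦ ?_
    · obtain ⟨d, hd⟩ := N_nonempty (mem_compl.1 (mem_filter.1 hu).1)
      exact ⟨d, ((mem_bipartiteAbove _).1 hd).1, hd⟩
    · rintro u ⟨hu, hdu⟩ v ⟨hv, hdv⟩
      obtain ⟨huD, hu1⟩ := mem_filter.1 hu
      obtain ⟨hvD, hv1⟩ := mem_filter.1 hv
      refine eq_of_N_eq (mem_compl.1 huD) (mem_compl.1 hvD) ?_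
      obtain ⟨a, ha⟩ := card_eq_one.1 hu1
      obtain ⟨b, hb⟩ := card_eq_one.1 hv1
      grind
  have sum_card_N_le : ∑ u ∈ Dᶜ, #(N u) ≤ G.maxDegree * #D := by
    rw [sum_card_bipartiteAbove_eq_sum_card_bipartiteBelow, mul_comm, ← smul_eq_mul]
    refine sum_le_card_nsmul _ _ _ fun d _ ↦ (card_le_card fun u hu ↦ ?_).trans
      (G.degree_le_maxDegree d)
    exact (G.mem_neighborFinset d u).2 ((mem_bipartiteBelow _).1 hu).2.symm
  have two_mul_card_compl_le : 2 * #Dᶜ ≤ ∑ u ∈ Dᶜ, #(N u) + #{u ∈ Dᶜ | #(N u) = 1} := by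
    rw [card_filter, ← sum_add_distrib, mul_comm, ← smul_eq_mul]
    refine card_nsmul_le_sum _ _ _ fun u hu ↦ ?_
    have := (N_nonempty (mem_compl.1 hu)).card_pos
    split_ifs <;> omega
  rw [← card_compl_add_card D]
  linarith

end LocatingDomination

section Functigraph

variable {f : V → V} {a b : V}

@[simp]
theorem functigraph_adj_inl_inl : (functigraph G f).Adj (.inl a) (.inl b) ↔ G.Adj a b := by
  simpa [functigraph, G.adj_comm b a] using G.ne_of_adj

@[simp]
theorem functigraph_adj_inr_inr : (functigraph G f).Adj (.inr a) (.inr b) ↔ G.Adj a b := by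
  simpa [functigraph, G.adj_comm b a] using G.ne_of_adj

@[simp]
theorem functigraph_adj_inl_inr : (functigraph G f).Adj (.inl a) (.inr b) ↔ f a = b := by
  simp [functigraph]

@[simp]
theorem functigraph_adj_inr_inl : (functigraph G f).Adj (.inr a) (.inl b) ↔ f b = a := by
  simp [functigraph]

/-- The inclusion of the second copy of `G` into the functigraph `C(G, f)`. -/
def functigraphInr (G : SimpleGraph V) (f : V → V) : G →g functigraph G f where
  toFun := Sum.inr
  map_rel' := functigraph_adj_inr_inr.2

theorem functigraph_connected (hG : G.Connected) (f : V → V) : (functigraph G f).Connected := by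
  obtain ⟨c⟩ := hG.nonempty
  have reachable_inr (a : V) : (functigraph G f).Reachable (.inr a) (.inr c) :=
    (hG a c).map (functigraphInr G f)
  refine connected_iff_exists_forall_reachable _ |>.2 ⟨.inr c, ?_⟩
  rintro (u | a)
  · exact ((functigraph_adj_inl_inr.2 rfl : (functigraph G f).Adj (.inl u) _).reachable.trans
      (reachable_inr (f u))).symm
  · exact (reachable_inr a).symm

end Functigraph

section ConstantFunctigraph

variable {c : V}

theorem functigraph_const_reachable_inl_inl (u v : V) :
    (functigraph G fun _ ↦ c).Reachable (.inl u) (.inl v) :=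
  (functigraph_adj_inl_inr.2 rfl).reachable.trans (functigraph_adj_inr_inl.2 rfl).reachable

theorem dist_functigraph_const_inl_inl_of_not_adj {u v : V} (hne : u ≠ v) (huv : ¬G.Adj u v) :
    (functigraph G fun _ ↦ c).dist (.inl u) (.inl v) = 2 := by
  have hu : (functigraph G fun _ ↦ c).Adj (.inl u) (.inr c) := functigraph_adj_inl_inr.2 rfl
  have hv : (functigraph G fun _ ↦ c).Adj (.inr c) (.inl v) := functigraph_adj_inr_inl.2 rfl
  refine le_antisymm (dist_le (.cons hu (.cons hv .nil))) ?_
  exact (functigraph_const_reachable_inl_inl u v).one_lt_dist_of_ne_of_not_adj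
    (Sum.inl_injective.ne hne) (functigraph_adj_inl_inl.not.2 huv)

/-- Collapsing the first copy to a single pendant vertex attached to `c` does not increase
distances. -/
theorem dist_le_dist_functigraph_const_inr (hG : G.Connected) (x : V ⊕ V) (b : V) :
    x.elim (fun _ ↦ G.dist c b + 1) (G.dist · b) ≤ (functigraph G fun _ ↦ c).dist x (.inr b) := by
  have h := le_add_dist_of_adj_le_add_one
    (g := fun x : V ⊕ V ↦ x.elim (fun _ ↦ G.dist c b + 1) (G.dist · b)) ?_
    ((functigraph_connected hG fun _ ↦ c) x (.inr b))
  · simpa using h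
  rintro (u | a) (v | d) had
  · simp
  · obtain rfl : c = d := functigraph_adj_inl_inr.1 had
    exact le_rfl
  · obtain rfl : c = a := functigraph_adj_inr_inl.1 had
    simp only [Sum.elim_inl, Sum.elim_inr]
    omega
  · have had : G.Adj a d := functigraph_adj_inr_inr.1 had
    have := hG.dist_triangle (u := a) (v := d) (w := b)
    rw [dist_eq_one_iff_adj.2 had] at this
    simp only [Sum.elim_inr]
    omega

theorem dist_functigraph_const_inr_inr (hG : G.Connected) (a b : V) :
    (functigraph G fun _ ↦ c).dist (.inr a) (.inr b) = G.dist a b :=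
  le_antisymm (dist_map_le (functigraphInr G _) (hG a b))
    (dist_le_dist_functigraph_const_inr hG (.inr a) b)

theorem dist_functigraph_const_inl_inr (hG : G.Connected) (u b : V) :
    (functigraph G fun _ ↦ c).dist (.inl u) (.inr b) = G.dist c b + 1 := by
  refine le_antisymm ?_ (dist_le_dist_functigraph_const_inr hG (.inl u) b)
  have hu : (functigraph G fun _ ↦ c).Adj (.inl u) (.inr c) := functigraph_adj_inl_inr.2 rfl
  have := (functigraph_connected hG fun _ ↦ c).dist_triangle
    (u := .inl u) (v := .inr c) (w := .inr b)
  rwa [dist_eq_one_iff_adj.2 hu, dist_functigraph_const_inr_inr hG, add_comm] at this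

theorem dist_functigraph_const_inr_inl (hG : G.Connected) (a u : V) :
    (functigraph G fun _ ↦ c).dist (.inr a) (.inl u) = G.dist a c + 1 := by
  rw [SimpleGraph.dist_comm, dist_functigraph_const_inl_inr hG, SimpleGraph.dist_comm]

theorem isLocating_iff_dist_functigraph_const {D : Set V} :
    IsLocating G D ↔ ∀ u v, (∀ d ∈ D, (functigraph G fun _ ↦ c).dist (.inl u) (.inl d) =
      (functigraph G fun _ ↦ c).dist (.inl v) (.inl d)) → u = v := by
  constructor
  · intro hD u v huv
    by_cases hu : u ∈ D
    · have := (huv u hu).symm.trans dist_self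
      exact (Sum.inl_injective
        ((functigraph_const_reachable_inl_inl v u).dist_eq_zero_iff.1 this)).symm
    by_cases hv : v ∈ D
    · have := (huv v hv).trans dist_self
      exact Sum.inl_injective ((functigraph_const_reachable_inl_inl u v).dist_eq_zero_iff.1 this)
    · refine hD u v hu hv fun d hd ↦ ?_
      rw [← functigraph_adj_inl_inl (f := fun _ ↦ c), ← dist_eq_one_iff_adj, huv d hd,
        dist_eq_one_iff_adj, functigraph_adj_inl_inl]
  · intro h u v hu hv huv
    refine h u v fun d hd ↦ ?_
    by_cases had : G.Adj u d
    · rw [dist_eq_one_iff_adj.2 (functigraph_adj_inl_inl.2 had),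
        dist_eq_one_iff_adj.2 (functigraph_adj_inl_inl.2 ((huv d hd).1 had))]
    · rw [dist_functigraph_const_inl_inl_of_not_adj (ne_of_mem_of_not_mem hd hu).symm had,
        dist_functigraph_const_inl_inl_of_not_adj (ne_of_mem_of_not_mem hd hv).symm
          ((huv d hd).not.1 had)]

theorem IsResolving.isLocating_preimage_inl (hG : G.Connected) {S : Set (V ⊕ V)}
    (hS : IsResolving (functigraph G fun _ ↦ c) S) : IsLocating G (Sum.inl ⁻¹' S) := by
  rw [isLocating_iff_dist_functigraph_const (c := c)]
  intro u v huv
  by_contra hne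
  obtain ⟨d | b, hw, hdist⟩ := hS (.inl u) (.inl v) (Sum.inl_injective.ne hne)
  · exact hdist (huv d hw)
  · simp only [dist_functigraph_const_inl_inr hG, ne_eq, not_true_eq_false] at hdist

/-- Two neighbours `x`, `y` of `c` can only be told apart by the second copy, and bipartiteness
makes their distances to a vertex that does so differ by two. -/
theorem IsResolving.exists_inr_mem_dist_eq_succ (hG : G.Connected) (hbip : G.IsBipartite)
    {S : Set (V ⊕ V)} (hS : IsResolving (functigraph G fun _ ↦ c) S) {x y : V} (hx : G.Adj c x)
    (hy : G.Adj c y) (hxy : x ≠ y) :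
    ∃ z b, G.Adj c z ∧ Sum.inr b ∈ S ∧ G.dist z b = G.dist c b + 1 := by
  obtain ⟨d | b, hw, hdist⟩ := hS (.inr x) (.inr y) (Sum.inr_injective.ne hxy)
  · simp [dist_functigraph_const_inr_inl hG, dist_eq_one_iff_adj.2 hx.symm,
      dist_eq_one_iff_adj.2 hy.symm] at hdist
  rw [dist_functigraph_const_inr_inr hG, dist_functigraph_const_inr_inr hG] at hdist
  have dist_eq {z : V} (hz : G.Adj c z) :
      G.dist z b = G.dist c b + 1 ∨ G.dist z b = G.dist c b - 1 := by
    have hne := dist_ne_dist_of_adj_of_isBipartite hbip hz (hG z b)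
    have h := hz.diff_dist_adj (u := b)
    rw [G.dist_comm (u := b), G.dist_comm (u := b)] at h
    exact h.resolve_left hne.symm
  obtain hxb | hxb := dist_eq hx
  · exact ⟨x, b, hx, hw, hxb⟩
  · exact ⟨y, b, hy, hw, (dist_eq hy).resolve_right fun hyb ↦ hdist (hxb.trans hyb.symm)⟩

/-- A first-copy vertex that is not dominated looks like a neighbour of `c` to the first copy. -/
theorem IsResolving.exists_inr_mem_dist_ne_of_notMem_closedNbhd (hG : G.Connected)
    {S : Set (V ⊕ V)} (hS : IsResolving (functigraph G fun _ ↦ c) S) {u z : V}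
    (hu : u ∉ closedNbhd G (Sum.inl ⁻¹' S)) (hz : G.Adj c z) :
    ∃ b, Sum.inr b ∈ S ∧ G.dist z b ≠ G.dist c b + 1 := by
  obtain ⟨d | b, hw, hdist⟩ := hS (.inr z) (.inl u) Sum.inr_ne_inl
  · have hne : u ≠ d := fun hud ↦ hu (.inl (hud ▸ hw))
    have hud : ¬G.Adj u d := fun had ↦ hu (.inr ⟨d, hw, had⟩)
    rw [dist_functigraph_const_inr_inl hG, dist_eq_one_iff_adj.2 hz.symm,
      dist_functigraph_const_inl_inl_of_not_adj hne hud] at hdist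
    exact absurd rfl hdist
  · rw [dist_functigraph_const_inr_inr hG, dist_functigraph_const_inl_inr hG] at hdist
    exact ⟨b, hw, hdist⟩

theorem IsResolving.locDomNum_add_one_le (hG : G.Connected) (hbip : G.IsBipartite)
    {S : Finset (V ⊕ V)} (hS : IsResolving (functigraph G fun _ ↦ c) S) {x y : V}
    (hx : G.Adj c x) (hy : G.Adj c y) (hxy : x ≠ y) : locDomNum G + 1 ≤ #S := by
  classical
  have coe_toLeft : Sum.inl ⁻¹' (S : Set (V ⊕ V)) = (S.toLeft : Set V) := by
    ext; simp
  have hloc := coe_toLeft ▸ hS.isLocating_preimage_inl hG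
  obtain ⟨z, b, hz, hb, hzb⟩ := hS.exists_inr_mem_dist_eq_succ hG hbip hx hy hxy
  rw [← card_toLeft_add_card_toRight]
  by_cases hdom : ∀ u, u ∈ closedNbhd G S.toLeft
  · have := locDomNum_le ⟨hloc, hdom⟩
    have : 0 < #S.toRight := card_pos.2 ⟨b, mem_toRight.2 hb⟩
    omega
  · obtain ⟨u, hu⟩ := not_forall.1 hdom
    obtain ⟨b', hb', hzb'⟩ :=
      hS.exists_inr_mem_dist_ne_of_notMem_closedNbhd hG (coe_toLeft ▸ hu) hz
    have hinsert : locDomNum G ≤ #(insert u S.toLeft) :=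
      locDomNum_le (by rw [coe_insert]; exact hloc.isLocDom_insert hu)
    have := card_insert_le u S.toLeft
    have : 1 < #S.toRight := one_lt_card.2
      ⟨b, mem_toRight.2 hb, b', mem_toRight.2 hb', fun h ↦ hzb' (h ▸ hzb)⟩
    omega

theorem exists_dist_functigraph_const_inl_ne_inr (hG : G.Connected) {D : Set V}
    (hD : ∀ u, u ∈ closedNbhd G D) (u : V) {a : V} (ha : a ≠ c) :
    ∃ d ∈ D, (functigraph G fun _ ↦ c).dist (.inl u) (.inl d) ≠
      (functigraph G fun _ ↦ c).dist (.inr a) (.inl d) := by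
  have hpos := hG.pos_dist_of_ne ha
  obtain hu | ⟨d, hd, hud⟩ := hD u
  · refine ⟨u, hu, ?_⟩
    rw [dist_self, dist_functigraph_const_inr_inl hG]
    omega
  · refine ⟨d, hd, ?_⟩
    rw [dist_eq_one_iff_adj.2 (functigraph_adj_inl_inl.2 hud), dist_functigraph_const_inr_inl hG]
    omega

theorem IsLocDom.isResolving_functigraph_const (hG : G.Connected) {D : Set V}
    (hD : IsLocDom G D) {b : V} (hb : IsResolving G {c, b}) :
    IsResolving (functigraph G fun _ ↦ c) (insert (.inr b) (Sum.inl '' D)) := by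
  have inl_inr (u a : V) : ∃ w ∈ insert (.inr b) (Sum.inl '' D),
      (functigraph G fun _ ↦ c).dist (.inl u) w ≠ (functigraph G fun _ ↦ c).dist (.inr a) w := by
    by_cases ha : a = c
    · refine ⟨.inr b, .inl rfl, ?_⟩
      rw [dist_functigraph_const_inl_inr hG, dist_functigraph_const_inr_inr hG, ha]
      exact Nat.succ_ne_self _
    · obtain ⟨d, hd, hdist⟩ := exists_dist_functigraph_const_inl_ne_inr hG hD.dominates u ha
      exact ⟨.inl d, .inr ⟨d, hd, rfl⟩, hdist⟩
  rintro (u | a) (v | a') hne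
  · by_contra! h
    exact hne (congrArg _ (isLocating_iff_dist_functigraph_const.1 hD.isLocating u v
      fun d hd ↦ h (.inl d) (.inr ⟨d, hd, rfl⟩)))
  · exact inl_inr u a'
  · obtain ⟨w, hw, hdist⟩ := inl_inr v a
    exact ⟨w, hw, hdist.symm⟩
  · obtain ⟨w, rfl | rfl, hdist⟩ := hb a a' (fun h ↦ hne (congrArg _ h))
    · obtain ⟨d, hd⟩ : D.Nonempty := by
        obtain hw | ⟨d, hd, -⟩ := hD.dominates w
        exacts [⟨w, hw⟩, ⟨d, hd⟩]
      refine ⟨.inl d, .inr ⟨d, hd, rfl⟩, ?_⟩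
      rw [dist_functigraph_const_inr_inl hG, dist_functigraph_const_inr_inl hG]
      exact (Nat.succ_injective.ne hdist)
    · refine ⟨.inr w, .inl rfl, ?_⟩
      rwa [dist_functigraph_const_inr_inr hG, dist_functigraph_const_inr_inr hG]

theorem metricDim_functigraph_const [Finite V] (hG : G.Connected) (hbip : G.IsBipartite) {x y b : V}
    (hx : G.Adj c x) (hy : G.Adj c y) (hxy : x ≠ y) (hb : IsResolving G {c, b}) :
    metricDim (functigraph G fun _ ↦ c) = locDomNum G + 1 := by
  classical
  obtain ⟨D, hD, hcard⟩ := exists_isLocDom_card_eq_locDomNum G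
  have hres := hD.isResolving_functigraph_const hG hb
  rw [← coe_image, ← coe_insert] at hres
  refine le_antisymm ?_ (le_csInf ⟨_, _, hres, finite_toSet _, rfl⟩ ?_)
  · calc metricDim (functigraph G fun _ ↦ c)
        ≤ #(insert (.inr b) (D.image Sum.inl)) :=
          Nat.sInf_le ⟨_, hres, finite_toSet _, Set.ncard_coe_finset _⟩
      _ ≤ #(D.image Sum.inl) + 1 := card_insert_le _ _
      _ ≤ locDomNum G + 1 := by grw [card_image_le, hcard]
  · rintro _ ⟨S, hS, hfin, rfl⟩
    lift S to Finset (V ⊕ V) using hfin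
    rw [Set.ncard_coe_finset]
    exact hS.locDomNum_add_one_le hG hbip hx hy hxy

end ConstantFunctigraph

section Cycle

variable {n : ℕ}

theorem eq_add_one_or_of_cycGraph_adj {a b : ZMod n} (h : (cycGraph n).Adj a b) :
    b = a + 1 ∨ a = b + 1 :=
  ((SimpleGraph.fromRel_adj _ _ _).1 h).2

theorem cycGraph_adj [Nontrivial (ZMod n)] {a b : ZMod n} :
    (cycGraph n).Adj a b ↔ b = a + 1 ∨ a = b + 1 := by
  refine ⟨eq_add_one_or_of_cycGraph_adj, fun h ↦ (SimpleGraph.fromRel_adj _ _ _).2 ⟨?_, h⟩⟩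
  rintro rfl
  simp at h

theorem maxDegree_cycGraph_le [NeZero n] [DecidableRel (cycGraph n).Adj] :
    (cycGraph n).maxDegree ≤ 2 := by
  refine maxDegree_le_of_forall_degree_le _ _ fun a ↦ ?_
  refine (card_le_card fun b hb ↦ ?_).trans (card_le_two (a := a + 1) (b := a - 1))
  rw [mem_insert, mem_singleton, eq_sub_iff_add_eq, eq_comm (b := a)]
  exact eq_add_one_or_of_cycGraph_adj ((mem_neighborFinset _ _ _).1 hb)

theorem isBipartite_cycGraph (hn : Even n) : (cycGraph n).IsBipartite := by
  let parity : ZMod n →+* ZMod 2 := ZMod.castHom hn.two_dvd (ZMod 2)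
  refine ⟨Coloring.mk parity fun {a b} hab ↦ ?_⟩
  have ne_add_one (p : ZMod 2) : p ≠ p + 1 := left_ne_add.2 one_ne_zero
  obtain rfl | rfl := eq_add_one_or_of_cycGraph_adj hab
  · rw [map_add, map_one]
    exact ne_add_one _
  · rw [map_add, map_one]
    exact (ne_add_one _).symm

theorem exists_walk_cycGraph_natCast_add [Nontrivial (ZMod n)] (a : ZMod n) (k : ℕ) :
    ∃ p : (cycGraph n).Walk a (a + k), p.length = k := by
  induction k with
  | zero => exact ⟨Walk.nil.copy rfl (by simp), by simp⟩
  | succ k ih =>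
    obtain ⟨p, hp⟩ := ih
    have hadj : (cycGraph n).Adj (a + k) (a + (k + 1 : ℕ)) :=
      cycGraph_adj.2 (.inl (by push_cast; ring))
    exact ⟨p.concat hadj, by rw [Walk.length_concat, hp]⟩

theorem cycGraph_connected [NeZero n] [Nontrivial (ZMod n)] : (cycGraph n).Connected where
  preconnected a b := by
    obtain ⟨p, -⟩ := exists_walk_cycGraph_natCast_add a (b - a).val
    rw [ZMod.natCast_zmod_val, add_sub_cancel] at p
    exact p.reachable

theorem dist_cycGraph_add_intCast_le [Nontrivial (ZMod n)] (a : ZMod n) (k : ℤ) :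
    (cycGraph n).dist a (a + k) ≤ k.natAbs := by
  obtain ⟨m, rfl | rfl⟩ := Int.eq_nat_or_neg k
  · obtain ⟨p, hp⟩ := exists_walk_cycGraph_natCast_add a m
    simpa [hp] using dist_le p
  · obtain ⟨p, hp⟩ := exists_walk_cycGraph_natCast_add (a - (m : ZMod n)) m
    simpa [hp, SimpleGraph.dist_comm, ← sub_eq_add_neg] using dist_le p

theorem natAbs_valMinAbs_sub_le_add_one_of_cycGraph_adj [NeZero n] (b : ZMod n) {x y : ZMod n}
    (hxy : (cycGraph n).Adj x y) :
    (x - b).valMinAbs.natAbs ≤ (y - b).valMinAbs.natAbs + 1 := by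
  have natAbs_le (k : ℤ) (hk : x - b = k) : (x - b).valMinAbs.natAbs ≤ k.natAbs :=
    ZMod.natAbs_min_of_le_div_two n _ _ (by rw [ZMod.coe_valMinAbs, hk])
      (ZMod.natAbs_valMinAbs_le _)
  obtain rfl | rfl := eq_add_one_or_of_cycGraph_adj hxy
  · have := natAbs_le ((x + 1 - b).valMinAbs - 1) (by push_cast [ZMod.coe_valMinAbs]; ring)
    omega
  · have := natAbs_le ((y - b).valMinAbs + 1) (by push_cast [ZMod.coe_valMinAbs]; ring)
    omega

theorem dist_cycGraph [NeZero n] [Nontrivial (ZMod n)] (a b : ZMod n) :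
    (cycGraph n).dist a b = (a - b).valMinAbs.natAbs := by
  apply le_antisymm
  · simpa [SimpleGraph.dist_comm] using dist_cycGraph_add_intCast_le b (a - b).valMinAbs
  · simpa using le_add_dist_of_adj_le_add_one
      (fun x y ↦ natAbs_valMinAbs_sub_le_add_one_of_cycGraph_adj b) (cycGraph_connected a b)

theorem isResolving_cycGraph_pair [NeZero n] [Nontrivial (ZMod n)] (h2 : (2 : ZMod n) ≠ 0)
    (c : ZMod n) : IsResolving (cycGraph n) {c, c + 1} := by
  intro x y hxy
  by_contra! h
  have hc := h c (.inl rfl)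
  have hc1 := h (c + 1) (.inr rfl)
  rw [dist_cycGraph, dist_cycGraph, ZMod.natAbs_valMinAbs_eq_natAbs_valMinAbs] at hc hc1
  have hx : x - c = -(y - c) := hc.resolve_left fun h ↦ hxy (sub_left_injective h)
  have hx1 : x - (c + 1) = -(y - (c + 1)) := hc1.resolve_left fun h ↦ hxy (sub_left_injective h)
  exact h2 (by linear_combination hx - hx1)

theorem isLocDom_cycGraph_of_forall_notMem [Nontrivial (ZMod n)] (h4 : (4 : ZMod n) ≠ 0)
    {D : Set (ZMod n)} (hdom : ∀ u ∉ D, u - 1 ∈ D ∨ u + 1 ∈ D)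
    (hsep : ∀ u ∉ D, u + 1 ∈ D → u + 2 ∉ D → u - 1 ∈ D ∨ u + 3 ∈ D) :
    IsLocDom (cycGraph n) D where
  isLocating u v hu hv huv := by
    have h2 : (2 : ZMod n) ≠ 0 := fun h2 ↦ h4 (by linear_combination 2 * h2)
    -- Two vertices dominated by a common `d` are `d - 1` and `d + 1`.
    have traces_ne {u : ZMod n} (hu : u ∉ D) (hv : u + 2 ∉ D) (hu1 : u + 1 ∈ D)
        (htrace : ∀ d ∈ D, (cycGraph n).Adj u d ↔ (cycGraph n).Adj (u + 2) d) : False := by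
      obtain hd | hd := hsep u hu hu1 hv
      · obtain h | h := cycGraph_adj.1 ((htrace _ hd).1 (cycGraph_adj.2 (.inr (by ring))))
        · exact h4 (by linear_combination -h)
        · exact h2 (by linear_combination h)
      · obtain h | h := cycGraph_adj.1 ((htrace _ hd).2 (cycGraph_adj.2 (.inl (by ring))))
        · exact h2 (by linear_combination h)
        · exact h4 (by linear_combination -h)
    obtain hd | hd := hdom u hu
    · obtain h | h := cycGraph_adj.1 ((huv _ hd).1 (cycGraph_adj.2 (.inr (by ring))))
      · obtain rfl : u = v + 2 := by linear_combination h
        refine (traces_ne hv hu ?_ fun d hd ↦ (huv d hd).symm).elim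
        convert hd using 1; ring
      · linear_combination -h
    · obtain h | h := cycGraph_adj.1 ((huv _ hd).1 (cycGraph_adj.2 (.inl rfl)))
      · linear_combination h
      · obtain rfl : v = u + 2 := by linear_combination h
        exact (traces_ne hu hv hd huv).elim
  dominates u := by
    by_cases hu : u ∈ D
    · exact .inl hu
    obtain h | h := hdom u hu
    · exact .inr ⟨_, h, cycGraph_adj.2 (.inr (by ring))⟩
    · exact .inr ⟨_, h, cycGraph_adj.2 (.inl rfl)⟩

/-- The first `⌈2n/5⌉` of the vertices `0, 2, 5, 7, 10, 12, …` of the cycle: an optimal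
locating-dominating set when `3 ≤ n` and `n ≠ 4`. -/
def cycLocDomSet (n : ℕ) : Finset (ZMod n) :=
  (range ⌈(2 * (n : ℚ)) / 5⌉₊).image fun k ↦ ((5 * k / 2 : ℕ) : ZMod n)

theorem natCast_mem_cycLocDomSet {m : ℕ} (hm : m < n) (h5 : m % 5 = 0 ∨ m % 5 = 2) :
    (m : ZMod n) ∈ cycLocDomSet n := by
  refine mem_image.2 ⟨(2 * m + 1) / 5, ?_, congrArg _ (by omega)⟩
  rw [mem_range, Nat.lt_ceil, lt_div_iff₀ (by norm_num)]
  exact_mod_cast (by omega : (2 * m + 1) / 5 * 5 < 2 * n)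

theorem isLocDom_cycLocDomSet (hn : 3 ≤ n) (hn4 : n ≠ 4) :
    IsLocDom (cycGraph n) (cycLocDomSet n) := by
  have : NeZero n := ⟨by omega⟩
  have : Fact (1 < n) := ⟨by omega⟩
  have four_ne_zero : (4 : ZMod n) ≠ 0 := fun h ↦ by
    have := Nat.le_of_dvd four_pos ((ZMod.natCast_eq_zero_iff 4 n).1 h)
    obtain rfl : n = 3 := by omega
    exact absurd h (by decide)
  have pred_mem_or {u : ZMod n} (hu : u ∉ cycLocDomSet n) :
      u - 1 ∈ cycLocDomSet n ∨ ∃ m < n, m % 5 = 4 ∧ (m : ZMod n) = u := by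
    have hmod : ¬(u.val % 5 = 0 ∨ u.val % 5 = 2) := fun h ↦
      hu (ZMod.natCast_zmod_val u ▸ natCast_mem_cycLocDomSet u.val_lt h)
    refine or_iff_not_imp_right.2 fun hnot ↦ ?_
    have h4 : u.val % 5 ≠ 4 := fun h ↦ hnot ⟨_, u.val_lt, h, ZMod.natCast_zmod_val u⟩
    have hmem := natCast_mem_cycLocDomSet (n := n) (m := u.val - 1)
      (by have := u.val_lt; omega) (by omega)
    rwa [Nat.cast_pred (by omega), ZMod.natCast_zmod_val] at hmem
  have wrap_mem {m : ℕ} (hlt : m < n → m % 5 = 0 ∨ m % 5 = 2)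
      (hle : n ≤ m → m = n ∨ m = n + 2) : (m : ZMod n) ∈ cycLocDomSet n := by
    obtain hm | hm := lt_or_ge m n
    · exact natCast_mem_cycLocDomSet hm (hlt hm)
    · have := natCast_mem_cycLocDomSet (n := n) (m := m - n) (by grind) (by grind)
      rwa [Nat.cast_sub hm, ZMod.natCast_self, sub_zero] at this
  refine isLocDom_cycGraph_of_forall_notMem four_ne_zero (fun u hu ↦ ?_) fun u hu _ hu2 ↦ ?_
  · refine (pred_mem_or hu).imp_right ?_
    rintro ⟨m, hm, h4, rfl⟩
    exact_mod_cast wrap_mem (m := m + 1) (by omega) (by omega)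
  · refine (pred_mem_or hu).imp_right ?_
    rintro ⟨m, hm, h4, rfl⟩
    have : m + 2 ≠ n := fun h ↦
      hu2 (by exact_mod_cast wrap_mem (m := m + 2) (by omega) (by omega))
    exact_mod_cast wrap_mem (m := m + 3) (by omega) (by omega)

theorem isLocDom_cycGraph_four : IsLocDom (cycGraph 4) {0, 1} := by
  have : Fact (1 < 4) := ⟨by norm_num⟩
  constructor
  · simp only [IsLocating, Set.mem_insert_iff, Set.mem_singleton_iff, forall_eq_or_imp, forall_eq,
      cycGraph_adj]
    decide
  · simp only [closedNbhd, Set.mem_union, Set.mem_ofPred_eq, Set.mem_insert_iff,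
      Set.mem_singleton_iff, exists_eq_or_imp, exists_eq_left, cycGraph_adj]
    decide

theorem locDomNum_cycGraph (hn : 3 ≤ n) :
    locDomNum (cycGraph n) = ⌈(2 * (n : ℚ)) / 5⌉₊ := by
  classical
  have : NeZero n := ⟨by omega⟩
  apply le_antisymm
  · by_cases hn4 : n = 4
    · subst hn4
      calc locDomNum (cycGraph 4) ≤ #{0, 1} :=
            locDomNum_le (by simpa using isLocDom_cycGraph_four)
        _ = 2 := by decide
        _ = ⌈(2 * ((4 : ℕ) : ℚ)) / 5⌉₊ := by norm_num
    · calc locDomNum (cycGraph n) ≤ #(cycLocDomSet n) :=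
            locDomNum_le (isLocDom_cycLocDomSet hn hn4)
        _ ≤ ⌈(2 * (n : ℚ)) / 5⌉₊ := card_image_le.trans_eq (card_range _)
  · obtain ⟨D, hD, hcard⟩ := exists_isLocDom_card_eq_locDomNum (cycGraph n)
    have two_mul_le : 2 * n ≤ 5 * #D := calc
      2 * n = 2 * Fintype.card (ZMod n) := by rw [ZMod.card]
      _ ≤ ((cycGraph n).maxDegree + 3) * #D := hD.two_mul_card_le
      _ ≤ (2 + 3) * #D := by grw [maxDegree_cycGraph_le]
    rw [← hcard, Nat.ceil_le, div_le_iff₀ (by norm_num)]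
    exact_mod_cast (by omega : 2 * n ≤ #D * 5)

end Cycle

theorem stmt15 (n : ℕ) (hev : Even n) (hn : 4 <= n) (f₀ : ZMod n -> ZMod n)
    (c : ZMod n) (hf : ∀ u, f₀ u = c) :
    metricDim (functigraph (cycGraph n) f₀) = ⌈(2 * (n : ℚ)) / 5⌉₊ + 1 := by
  have : NeZero n := ⟨by omega⟩
  have : Fact (1 < n) := ⟨by omega⟩
  have two_ne_zero : (2 : ZMod n) ≠ 0 := fun h ↦ by
    have := Nat.le_of_dvd two_pos ((ZMod.natCast_eq_zero_iff 2 n).1 h)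
    omega
  obtain rfl : f₀ = fun _ ↦ c := funext hf
  have add_one_ne_sub_one : c + 1 ≠ c - 1 := fun h ↦ two_ne_zero (by linear_combination h)
  rw [metricDim_functigraph_const cycGraph_connected (isBipartite_cycGraph hev)
    (cycGraph_adj.2 (.inl rfl)) (cycGraph_adj.2 (.inr (sub_add_cancel c 1).symm))
    add_one_ne_sub_one (isResolving_cycGraph_pair two_ne_zero c),
    locDomNum_cycGraph (by omega)]
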